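/- Let A, B ⊆ [m] with A ⊄ B and B ⊄ A, let Δ = Δ_A ∪ Δ_B, D = Δ + wΔ = {d_1 + w·d_2 : d_1, d_2 ∈ Δ} ⊆ F_4^m, N = 2^{|A|} + 2^{|B|} − 2^{|A∩B|}, s = |A\B|, t = |B\A|. Then |D^*| = N² − 1, C_{D^*} has exactly 4^{|A∪B|} distinct codewords (dimension |A∪B| over F_4), and the multiset {wt(c_{D^*}(x)) : x ∈ F_4^m} is obtained by combining the following weight–multiplicity pairs, each multiplicity further multiplied by 4^{m−|A∪B|} (coinciding weight values accumulate): weight 0, multiplicity 1; weight 2^{|A|}(3·2^{|A|−2} + 2^{|B|} − 2^{|A∩B|}), multiplicity 3(2^s−1); weight 2^{|B|}(2^{|A|} + 3·2^{|B|−2} − 2^{|A∩B|}), multiplicity 3(2^t−1); weight (2^{|A|}+2^{|B|})(3·2^{|A|−2} + 3·2^{|B|−2} − 2^{|A∩B|}), multiplicity 3(2^s−1)(2^t−1); weight (3/4)·2^{|A|}(2^{|A|} + 2^{|B|+1} − 2^{|A∩B|+1}), multiplicity (2^s−1)(2^s−2); weight (3/4)·2^{|B|}(2^{|A|+1} + 2^{|B|}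 − 2^{|A∩B|+1}), multiplicity (2^t−1)(2^t−2); weight (3/4)N² − (1/4)(2^{|A|}−2^{|A∩B|})(2^{|B|}−2^{|A∩B|}) + (1/4)·2^{|A∩B|}(2^{|A|}+2^{|B|}−2^{|A∩B|+1}), multiplicity 6(2^s−1)(2^t−1); weight (3/4)N² + (1/4)·2^{|A∩B|}(2^{|A|+1} − 3·2^{|A∩B|}), multiplicity 3(2^s−1)(2^t−1)(2^t−2); weight (3/4)N² + (1/4)·2^{|A∩B|}(2^{|B|+1} − 3·2^{|A∩B|}), multiplicity 3(2^s−1)(2^t−1)(2^s−2); weight (3/4)(2^{|A|}+2^{|B|})(2^{|A|}+2^{|B|}−2^{|A∩B|+1}), multiplicity (2^s−1)(2^t−1)(2^s−2)(2^t−2); weight (3/4)N², multiplicity 4^{|A∪B|} − 4^{s+t}. -/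

import Mathlib

open Finset

/-- The support of a binary vector, as a finset of coordinates. -/
def supp {m : ℕ} (v : Fin m → ZMod 2) : Finset (Fin m) :=
  Finset.univ.filter (fun i => v i ≠ 0)

/-- The simplicial complex generated by `A`: all binary vectors with support contained in `A`. -/
def delta {m : ℕ} (A : Finset (Fin m)) : Finset (Fin m → ZMod 2) :=
  Finset.univ.filter (fun v => supp v ⊆ A)

variable {F : Type} [Field F] [Fintype F] [DecidableEq F]

/-- The embedding of `F_2 = {0,1}` into a field `F`. -/
def e2 (a : ZMod 2) : F := (a.val : F)

/-- The inner product `x·d = Σ x_i d_i` of two vectors over `F`. -/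
def dotF {m : ℕ} (x d : Fin m → F) : F := ∑ i, x i * d i

/-- The quaternary vector `d_1 + w·d_2` attached to a pair of binary vectors. -/
def dvec {m : ℕ} (w : F) (p : (Fin m → ZMod 2) × (Fin m → ZMod 2)) : Fin m → F :=
  fun i => e2 (p.1 i) + w * e2 (p.2 i)

/-- The Hamming weight of the codeword `c_D(x) = (x·d)_{d∈D}`. -/
def wtF {m : ℕ} (D : Finset (Fin m → F)) (x : Fin m → F) : ℕ :=
  (D.filter (fun d => dotF x d ≠ 0)).card

/-- The codeword `c_D(x) = (x·d)_{d∈D}` of the code with defining set `D`. -/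
def codeword {m : ℕ} (D : Finset (Fin m → F)) (x : Fin m → F) : {d // d ∈ D} → F :=
  fun d => dotF x d.1

/-!
In characteristic two, write a message as `x = α + w β` with binary vectors `α`, `β`, and a vector
of `D` as `d = d₁ + w d₂`. Then `x · d = (α·d₁ + β·d₂) + w (β·d₁ + (α + β)·d₂)`, so detecting
`x · d = 0` with the character `a ↦ (-1) ^ a` of both coefficients gives
`wt(x) = 3/4 N² - 1/4 (σ(α) σ(β) + σ(β) σ(α + β) + σ(α + β) σ(α))`,
where `N = |Δ|` and `σ(v) = ∑_{d ∈ Δ} (-1) ^ (v · d)`. By inclusion-exclusion `σ(v)` vanishes unless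
`v` is zero on `A ∩ B`, in which case it only depends on whether `v` is zero on `A \ B` and on
`B \ A`. The weight is thus a function of which of `α`, `β`, `α + β` vanish on each of the three
pieces; on a piece with `k` elements all three vanish for one pair `(α, β)`, exactly a prescribed
one of them for `2 ^ k - 1` pairs, and none of them for `(2 ^ k - 1) (2 ^ k - 2)` pairs.
-/

section ZeroIndicator

/-- The indicator function of the zero element. It takes values in `ℚ`, so that the character
sums below are polynomials in such indicators. -/
def zeroInd {V : Type*} [Zero V] [DecidableEq V] (v : V) : ℚ := if v = 0 then 1 else 0

@[simp]
lemma zeroInd_zero {V : Type*} [Zero V] [DecidableEq V] : zeroInd (0 : V) = 1 := if_pos rfl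

lemma zeroInd_of_ne_zero {V : Type*} [Zero V] [DecidableEq V] {v : V} (hv : v ≠ 0) :
    zeroInd v = 0 := if_neg hv

lemma zeroInd_mul_zeroInd_add {V : Type*} [AddGroup V] [DecidableEq V] (α β : V) :
    zeroInd β * zeroInd (α + β) = zeroInd α * zeroInd β := by
  by_cases hβ : β = 0 <;> simp [zeroInd, hβ]

lemma zeroInd_add_mul_zeroInd {V : Type*} [AddGroup V] [DecidableEq V] (α β : V) :
    zeroInd (α + β) * zeroInd α = zeroInd α * zeroInd β := by
  by_cases hα : α = 0 <;> simp [zeroInd, hα]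

lemma zeroInd_pi {ι V : Type*} [Fintype ι] [Zero V] [DecidableEq V] (v : ι → V) :
    zeroInd v = ∏ i, zeroInd (v i) := by
  simp [zeroInd, Finset.prod_ite_zero, funext_iff]

lemma zeroInd_fst_mul_zeroInd_snd {ι V W : Type*} [Fintype ι] [Zero V] [DecidableEq V]
    [Zero W] [DecidableEq W] (v : ι → V × W) :
    zeroInd (Prod.fst ∘ v) * zeroInd (Prod.snd ∘ v) = zeroInd v := by
  simp [zeroInd, -mul_ite, ite_and, funext_iff, Prod.ext_iff, forall_and]

lemma zeroInd_restrict_union {ι V : Type*} [DecidableEq ι] [Zero V] [DecidableEq V]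
    (S T : Finset ι) (v : ι → V) :
    zeroInd ((S ∪ T).restrict v) = zeroInd (S.restrict v) * zeroInd (T.restrict v) := by
  simp [zeroInd, -mul_ite, ite_and, funext_iff, or_imp, forall_and]

lemma sum_comp_zeroInd {V M : Type*} [Zero V] [Fintype V] [DecidableEq V] [AddCommMonoid M]
    (f : ℚ → M) : ∑ v : V, f (zeroInd v) = f 1 + (Fintype.card V - 1) • f 0 := by
  have hne : ∀ v ∈ ({0}ᶜ : Finset V), f (zeroInd v) = f 0 := fun v hv ↦ by
    rw [zeroInd_of_ne_zero (by simpa using hv)]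
  rw [Fintype.sum_eq_add_sum_compl 0, Finset.sum_congr rfl hne, zeroInd_zero,
    Finset.sum_const, Finset.card_compl, Finset.card_singleton]

end ZeroIndicator

section PatternSum

variable {V M : Type*} [AddCommMonoid M]

/-- The sum of `f (zeroInd α) (zeroInd β) (zeroInd (α + β))` over all pairs of elements `α`, `β`
of an additive group of order `n`, see `sum_comp_zeroInd_triple`. For `n = 1` the truncated
difference `n - 2` is multiplied by `n - 1 = 0`. -/
def patternSum (n : ℕ) (f : ℚ → ℚ → ℚ → M) : M :=
  f 1 1 1 + (n - 1) • (f 1 0 0 + f 0 1 0 + f 0 0 1) + ((n - 1) * (n - 2)) • f 0 0 0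

lemma sum_comp_zeroInd_right [AddGroup V] [Fintype V] [DecidableEq V] (f : ℚ → ℚ → M) {α : V}
    (hα : α ≠ 0) :
    ∑ β, f (zeroInd β) (zeroInd (α + β)) = f 1 0 + f 0 1 + (Fintype.card V - 2) • f 0 0 := by
  have hne : -α ≠ 0 := neg_ne_zero.2 hα
  have hgeneric : ∀ β ∈ ({0, -α}ᶜ : Finset V), f (zeroInd β) (zeroInd (α + β)) = f 0 0 := by
    intro β hβ
    obtain ⟨hβ₀, hβ₁⟩ : β ≠ 0 ∧ β ≠ -α := by simpa using hβ
    rw [zeroInd_of_ne_zero hβ₀, zeroInd_of_ne_zero (by rwa [Ne, add_eq_zero_iff_neg_eq, eq_comm])]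
  rw [← Finset.sum_add_sum_compl {0, -α}, Finset.sum_pair hne.symm, Finset.sum_congr rfl hgeneric,
    Finset.sum_const, Finset.card_compl, Finset.card_pair hne.symm]
  simp [zeroInd_of_ne_zero, hα]

lemma sum_comp_zeroInd_triple [AddGroup V] [Fintype V] [DecidableEq V] (f : ℚ → ℚ → ℚ → M) :
    ∑ p : V × V, f (zeroInd p.1) (zeroInd p.2) (zeroInd (p.1 + p.2)) =
      patternSum (Fintype.card V) f := by
  have hne : ∀ α ∈ ({0}ᶜ : Finset V), ∑ β, f (zeroInd α) (zeroInd β) (zeroInd (α + β)) =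
      f 0 1 0 + f 0 0 1 + (Fintype.card V - 2) • f 0 0 0 := fun α hα ↦ by
    have hα₀ : α ≠ 0 := by simpa using hα
    rw [zeroInd_of_ne_zero hα₀, sum_comp_zeroInd_right (f 0) hα₀]
  simp only [Fintype.sum_prod_type]
  rw [Fintype.sum_eq_add_sum_compl 0, Finset.sum_congr rfl hne, Finset.sum_const,
    Finset.card_compl, Finset.card_singleton]
  simp only [zeroInd_zero, zero_add]
  rw [sum_comp_zeroInd fun q ↦ f 1 q q, patternSum]
  module

lemma sum_comp_zeroInd_fst_snd {ι : Type*} [Fintype ι] [DecidableEq ι] [AddGroup V] [Fintype V]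
    [DecidableEq V] (f : ℚ → ℚ → ℚ → M) :
    ∑ y : ι → V × V, f (zeroInd (Prod.fst ∘ y)) (zeroInd (Prod.snd ∘ y))
        (zeroInd (Prod.fst ∘ y + Prod.snd ∘ y)) =
      patternSum (Fintype.card V ^ Fintype.card ι) f := by
  rw [← Fintype.card_fun, ← sum_comp_zeroInd_triple]
  exact Fintype.sum_equiv (Equiv.arrowProdEquivProdArrow ι _ _) _ _ fun _ ↦ rfl

lemma sum_sum_sum_comp_zeroInd {ι₁ ι₂ ι₃ : Type*} [Fintype ι₁] [Fintype ι₂] [Fintype ι₃]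
    [DecidableEq ι₁] [DecidableEq ι₂] [DecidableEq ι₃] [AddGroup V] [Fintype V] [DecidableEq V]
    {g : ℚ → ℚ → ℚ → ℚ → ℚ → ℚ → ℚ → M} {c : M}
    (hg : ∀ p₁ p₂ p₃ q₁ q₂ q₃, g 0 p₁ p₂ p₃ q₁ q₂ q₃ = c) :
    ∑ y : ι₁ → V × V, ∑ z : ι₂ → V × V, ∑ x : ι₃ → V × V, g (zeroInd x)
        (zeroInd (Prod.fst ∘ y)) (zeroInd (Prod.snd ∘ y)) (zeroInd (Prod.fst ∘ y + Prod.snd ∘ y))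
        (zeroInd (Prod.fst ∘ z)) (zeroInd (Prod.snd ∘ z)) (zeroInd (Prod.fst ∘ z + Prod.snd ∘ z)) =
      patternSum (Fintype.card V ^ Fintype.card ι₁) (fun p₁ p₂ p₃ ↦
          patternSum (Fintype.card V ^ Fintype.card ι₂) (g 1 p₁ p₂ p₃))
        + (Fintype.card (V × V) ^ (Fintype.card ι₁ + Fintype.card ι₂) *
            (Fintype.card (V × V) ^ Fintype.card ι₃ - 1)) • c := by
  have hx (p₁ p₂ p₃ q₁ q₂ q₃ : ℚ) : ∑ x : ι₃ → V × V, g (zeroInd x) p₁ p₂ p₃ q₁ q₂ q₃ =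
      g 1 p₁ p₂ p₃ q₁ q₂ q₃ + (Fintype.card (V × V) ^ Fintype.card ι₃ - 1) • c := by
    rw [sum_comp_zeroInd fun r ↦ g r p₁ p₂ p₃ q₁ q₂ q₃, hg, Fintype.card_fun]
  have hz (p₁ p₂ p₃ : ℚ) := sum_comp_zeroInd_fst_snd (V := V) (ι := ι₂) (g 1 p₁ p₂ p₃)
  simp only [hx, hz, Finset.sum_add_distrib, Finset.sum_const, Finset.card_univ, Fintype.card_fun,
    smul_smul, pow_add, mul_assoc]
  rw [sum_comp_zeroInd_fst_snd fun p₁ p₂ p₃ ↦ patternSum _ (g 1 p₁ p₂ p₃)]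

lemma patternSum_of_rotate {n : ℕ} {f : ℚ → ℚ → ℚ → M} (hf : ∀ p q r, f q r p = f p q r) :
    patternSum n f = f 1 1 1 + (3 * (n - 1)) • f 1 0 0 + ((n - 1) * (n - 2)) • f 0 0 0 := by
  rw [patternSum, ← hf 0 1 0, ← hf 0 0 1, ← hf 0 1 0]
  module

lemma patternSum_rotate (n : ℕ) (f : ℚ → ℚ → ℚ → M) :
    patternSum n (fun p q r ↦ f q r p) = patternSum n f := by
  simp only [patternSum]
  module

end PatternSum

section Restriction

variable {ι G M : Type*} [DecidableEq ι] [Fintype G] [AddCommMonoid M]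

lemma sum_comp_restrict [Fintype ι] (S : Finset ι) (f : (S → G) → M) :
    ∑ y : ι → G, f (S.restrict y) =
      Fintype.card G ^ (Fintype.card ι - #S) • ∑ p : S → G, f p := by
  rw [Fintype.sum_equiv (Equiv.piEquivPiSubtypeProd (· ∈ S) fun _ ↦ G)
    (fun y ↦ f (S.restrict y)) (fun z ↦ f z.1) fun _ ↦ rfl, Fintype.sum_prod_type_right]
  simp only [Finset.sum_const, Finset.card_univ, Fintype.card_fun,
    Fintype.card_subtype_compl, Fintype.card_coe]

lemma sum_comp_restrict₂ {S T : Finset ι} (h : Disjoint S T) (f : (S → G) → (T → G) → M) :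
    ∑ y : ↥(S ∪ T) → G, f (Finset.restrict₂ (π := fun _ ↦ G) Finset.subset_union_left y)
        (Finset.restrict₂ (π := fun _ ↦ G) Finset.subset_union_right y) =
      ∑ p : S → G, ∑ q : T → G, f p q := by
  rw [← Fintype.sum_prod_type' f]
  symm
  refine Fintype.sum_equiv (Equiv.piFinsetUnion (fun _ ↦ G) h) _ _ fun ⟨p, q⟩ ↦ ?_
  congr 1 <;> funext ⟨i, hi⟩
  · exact (Equiv.piFinsetUnion_left (fun _ ↦ G) h hi (Finset.mem_union_left T hi)).symm
  · exact (Equiv.piFinsetUnion_right (fun _ ↦ G) h hi (Finset.mem_union_right S hi)).symm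

lemma sum_comp_restrict_sdiff_sdiff_inter [Fintype ι] (A B : Finset ι)
    (f : (↥(A \ B) → G) → (↥(B \ A) → G) → (↥(A ∩ B) → G) → M) :
    ∑ y : ι → G, f ((A \ B).restrict y) ((B \ A).restrict y) ((A ∩ B).restrict y) =
      Fintype.card G ^ (Fintype.card ι - #(A ∪ B)) • ∑ p, ∑ q, ∑ r, f p q r := by
  have hBA : Disjoint (B \ A) (A ∩ B) := by
    rw [Finset.inter_comm]
    exact Finset.disjoint_sdiff_inter B A
  have hAB : Disjoint (A \ B) (B \ A ∪ A ∩ B) := by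
    rw [Finset.inter_comm, Finset.sdiff_union_inter]
    exact Finset.sdiff_disjoint
  have hunion : A ∪ B = A \ B ∪ (B \ A ∪ A ∩ B) := by
    rw [Finset.inter_comm, Finset.sdiff_union_inter, Finset.sdiff_union_self_eq_union]
  rw [hunion]
  simp only [← sum_comp_restrict₂ hBA]
  rw [← sum_comp_restrict₂ hAB, ← sum_comp_restrict]
  rfl

end Restriction

section CharacterSum

variable {ι : Type*} [Fintype ι]

/-- The nontrivial character `a ↦ (-1) ^ a` of `ZMod 2`. -/
def signChar : AddChar (ZMod 2) ℚ := AddChar.zmodChar 2 neg_one_sq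

/-- The character sum `v ↦ ∑_{d ∈ E} (-1) ^ (v · d)` of a set `E` of binary vectors. -/
def charSum (E : Finset (ι → ZMod 2)) (v : ι → ZMod 2) : ℚ := ∑ d ∈ E, signChar (v ⬝ᵥ d)

lemma zmod_two_eq_zero_or_eq_one (a : ZMod 2) : a = 0 ∨ a = 1 := by decide +revert

lemma signChar_one : signChar 1 = -1 := by
  rw [signChar, AddChar.zmodChar_apply, ZMod.val_one, pow_one]

lemma zeroInd_eq_signChar (a : ZMod 2) : zeroInd a = (1 + signChar a) / 2 := by
  obtain rfl | rfl := zmod_two_eq_zero_or_eq_one a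
  · simp
  · simp [zeroInd, signChar_one]

lemma zeroInd_mul_zeroInd_eq_signChar (a b : ZMod 2) :
    zeroInd a * zeroInd b = 1 / 4 * (1 + signChar a + signChar b + signChar (a + b)) := by
  rw [zeroInd_eq_signChar, zeroInd_eq_signChar, AddChar.map_add_eq_mul]
  ring

lemma signChar_dotProduct (v d : ι → ZMod 2) :
    signChar (v ⬝ᵥ d) = ∏ i, signChar (v i * d i) :=
  map_prod signChar.toMonoidHom (fun i ↦ Multiplicative.ofAdd (v i * d i)) Finset.univ

lemma charSum_mul_charSum (E : Finset (ι → ZMod 2)) (α β : ι → ZMod 2) :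
    charSum E α * charSum E β = ∑ p ∈ E ×ˢ E, signChar (α ⬝ᵥ p.1 + β ⬝ᵥ p.2) := by
  simp only [charSum, AddChar.map_add_eq_mul, Finset.sum_mul_sum, Finset.sum_product]

lemma charSum_zero (E : Finset (ι → ZMod 2)) : charSum E 0 = #E := by
  simp [charSum]

end CharacterSum

section SimplicialComplex

variable {m : ℕ}

lemma mem_delta {A : Finset (Fin m)} {v : Fin m → ZMod 2} : v ∈ delta A ↔ ∀ i ∉ A, v i = 0 := by
  simp only [delta, supp, Finset.mem_filter_univ, Finset.subset_iff]
  exact forall_congr' fun _ ↦ not_imp_comm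

lemma zero_mem_delta (A : Finset (Fin m)) : 0 ∈ delta A := by simp [mem_delta]

lemma delta_inter (A B : Finset (Fin m)) : delta A ∩ delta B = delta (A ∩ B) := by
  ext v
  simp [delta, Finset.subset_inter_iff]

lemma delta_eq_piFinset (A : Finset (Fin m)) :
    delta A = Fintype.piFinset fun i ↦ if i ∈ A then Finset.univ else {0} := by
  ext v
  rw [mem_delta, Fintype.mem_piFinset]
  refine forall_congr' fun i ↦ ?_
  by_cases hi : i ∈ A <;> simp [hi]

lemma charSum_delta (A : Finset (Fin m)) (v : Fin m → ZMod 2) :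
    charSum (delta A) v = 2 ^ #A * zeroInd (A.restrict v) := by
  have hcoord (i : Fin m) :
      ∑ d ∈ (if i ∈ A then Finset.univ else {0} : Finset (ZMod 2)), signChar (v i * d) =
        if i ∈ A then 2 * zeroInd (v i) else 1 := by
    by_cases hi : i ∈ A
    · simp only [hi, if_true]
      rw [show (Finset.univ : Finset (ZMod 2)) = {0, 1} from rfl, Finset.sum_pair zero_ne_one,
        zeroInd_eq_signChar, mul_zero, mul_one, AddChar.map_zero_eq_one]
      ring
    · simp [hi]
  simp only [charSum, signChar_dotProduct]
  rw [delta_eq_piFinset, ← Finset.prod_univ_sum _ fun i d ↦ signChar (v i * d),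
    Finset.prod_congr rfl fun i _ ↦ hcoord i, Finset.prod_ite_mem, Finset.univ_inter,
    Finset.prod_mul_distrib, Finset.prod_const, zeroInd_pi]
  exact congrArg _ (Finset.prod_coe_sort A fun i ↦ zeroInd (v i)).symm

lemma charSum_delta_union (A B : Finset (Fin m)) (v : Fin m → ZMod 2) :
    charSum (delta A ∪ delta B) v = zeroInd ((A ∩ B).restrict v) *
      (2 ^ #A * zeroInd ((A \ B).restrict v) + 2 ^ #B * zeroInd ((B \ A).restrict v)
        - 2 ^ #(A ∩ B)) := by
  have hA : zeroInd (A.restrict v) =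
      zeroInd ((A \ B).restrict v) * zeroInd ((A ∩ B).restrict v) := by
    rw [← zeroInd_restrict_union, Finset.sdiff_union_inter]
  have hB : zeroInd (B.restrict v) =
      zeroInd ((B \ A).restrict v) * zeroInd ((A ∩ B).restrict v) := by
    rw [← zeroInd_restrict_union, Finset.inter_comm, Finset.sdiff_union_inter]
  have hunion : charSum (delta A ∪ delta B) v + charSum (delta (A ∩ B)) v =
      charSum (delta A) v + charSum (delta B) v := by
    rw [← delta_inter]
    exact Finset.sum_union_inter
  rw [charSum_delta, charSum_delta, charSum_delta, hA, hB] at hunion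
  linear_combination hunion

lemma card_delta (A : Finset (Fin m)) : #(delta A) = 2 ^ #A := by
  simp [delta_eq_piFinset, apply_ite]

lemma card_delta_union (A B : Finset (Fin m)) :
    #(delta A ∪ delta B) = 2 ^ #A + 2 ^ #B - 2 ^ #(A ∩ B) := by
  rw [Finset.card_union, delta_inter, card_delta, card_delta, card_delta]

end SimplicialComplex

section DefiningSet

variable {K : Type} [Field K] {m : ℕ} {w : K}

/-- The defining set `D^*` consisting of the nonzero vectors `d₁ + w d₂` with `d₁, d₂ ∈ E`. -/
abbrev definingSet [DecidableEq K] (w : K) (E : Finset (Fin m → ZMod 2)) : Finset (Fin m → K) :=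
  ((E ×ˢ E).image (dvec w)).erase 0

lemma e2_zero : (e2 0 : K) = 0 := by simp [e2]

lemma e2_one : (e2 1 : K) = 1 := by simp [e2, ZMod.val_one]

lemma dvec_eq (w : K) (α β : Fin m → ZMod 2) :
    dvec w (α, β) = e2 ∘ α + w • (e2 ∘ β) := rfl

lemma dvec_zero (w : K) : dvec w (0 : (Fin m → ZMod 2) × (Fin m → ZMod 2)) = 0 := by
  funext i
  simp [dvec, e2_zero]

lemma e2_add_mul_e2_eq_zero_iff (hw : w ^ 2 + w + 1 = 0) {a b : ZMod 2} :
    e2 a + w * e2 b = 0 ↔ a = 0 ∧ b = 0 := by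
  have hw₀ : w ≠ 0 := by rintro rfl; simp at hw
  have hw₁ : 1 + w ≠ 0 := fun h ↦
    hw₀ ((pow_eq_zero_iff two_ne_zero).1 (by linear_combination hw - h))
  obtain rfl | rfl := zmod_two_eq_zero_or_eq_one a <;>
    obtain rfl | rfl := zmod_two_eq_zero_or_eq_one b <;> simp [e2_zero, e2_one, hw₀, hw₁]

variable [CharP K 2]

lemma e2_eq_castHom : (e2 : ZMod 2 → K) = ZMod.castHom (dvd_refl 2) K := by
  funext a
  exact (ZMod.cast_eq_val a).symm

lemma dvec_injective (hw : w ^ 2 + w + 1 = 0) : Function.Injective (dvec (m := m) w) := by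
  rintro ⟨α, β⟩ ⟨α', β'⟩ h
  have hcoord (i : Fin m) : α i - α' i = 0 ∧ β i - β' i = 0 := by
    rw [← e2_add_mul_e2_eq_zero_iff hw, e2_eq_castHom, map_sub, map_sub, ← e2_eq_castHom]
    have hi : e2 (α i) + w * e2 (β i) = e2 (α' i) + w * e2 (β' i) := congrFun h i
    linear_combination hi
  exact Prod.ext (funext fun i ↦ sub_eq_zero.1 (hcoord i).1)
    (funext fun i ↦ sub_eq_zero.1 (hcoord i).2)

lemma dotF_dvec_dvec (hw : w ^ 2 + w + 1 = 0) (α β d₁ d₂ : Fin m → ZMod 2) :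
    dotF (dvec w (α, β)) (dvec w (d₁, d₂)) =
      e2 (α ⬝ᵥ d₁ + β ⬝ᵥ d₂) + w * e2 (β ⬝ᵥ d₁ + (α + β) ⬝ᵥ d₂) := by
  have hw' : w ^ 2 = 1 + w := by linear_combination hw - (1 + w) * CharTwo.two_eq_zero (R := K)
  change dvec w (α, β) ⬝ᵥ dvec w (d₁, d₂) = _
  simp only [dvec_eq, e2_eq_castHom, map_add, RingHom.map_dotProduct, add_dotProduct,
    dotProduct_add, smul_dotProduct, dotProduct_smul, smul_eq_mul]
  linear_combination ((ZMod.castHom (dvd_refl 2) K ∘ β) ⬝ᵥ (ZMod.castHom (dvd_refl 2) K ∘ d₂)) * hw'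

variable [DecidableEq K]

lemma wtF_definingSet (hw : w ^ 2 + w + 1 = 0) (E : Finset (Fin m → ZMod 2)) (x : Fin m → K) :
    wtF (definingSet w E) x = #{p ∈ E ×ˢ E | dotF x (dvec w p) ≠ 0} := by
  have hzero : dotF x 0 = 0 := dotProduct_zero x
  rw [wtF, Finset.filter_erase, Finset.erase_eq_of_notMem (by simp [hzero]), Finset.filter_image,
    Finset.card_image_of_injective _ (dvec_injective hw)]

lemma card_filter_dotF_dvec_eq_zero (hw : w ^ 2 + w + 1 = 0) (E : Finset (Fin m → ZMod 2))
    (α β : Fin m → ZMod 2) :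
    (#{p ∈ E ×ˢ E | dotF (dvec w (α, β)) (dvec w p) = 0} : ℚ) =
      1 / 4 * (#E ^ 2 + charSum E α * charSum E β + charSum E β * charSum E (α + β)
        + charSum E (α + β) * charSum E α) := by
  have hterm (p : (Fin m → ZMod 2) × (Fin m → ZMod 2)) :
      (if dotF (dvec w (α, β)) (dvec w p) = 0 then 1 else 0 : ℚ) =
        1 / 4 * (1 + signChar (α ⬝ᵥ p.1 + β ⬝ᵥ p.2) + signChar (β ⬝ᵥ p.1 + (α + β) ⬝ᵥ p.2)
          + signChar ((α + β) ⬝ᵥ p.1 + α ⬝ᵥ p.2)) := by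
    have hsum : α ⬝ᵥ p.1 + β ⬝ᵥ p.2 + (β ⬝ᵥ p.1 + (α + β) ⬝ᵥ p.2) =
        (α + β) ⬝ᵥ p.1 + α ⬝ᵥ p.2 := by
      simp only [add_dotProduct]
      linear_combination CharTwo.add_self_eq_zero (β ⬝ᵥ p.2)
    rw [← hsum, ← zeroInd_mul_zeroInd_eq_signChar, dotF_dvec_dvec hw,
      if_congr (e2_add_mul_e2_eq_zero_iff hw) rfl rfl]
    simp only [zeroInd, ite_zero_mul_ite_zero, mul_one]
  simp only [charSum_mul_charSum, Finset.card_filter, Nat.cast_sum, Nat.cast_ite, Nat.cast_one,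
    Nat.cast_zero, hterm, ← Finset.mul_sum, Finset.sum_add_distrib, Finset.sum_const,
    Finset.card_product, nsmul_one, Nat.cast_mul, sq]

/-- The weight `3/4 N² - 1/4 (σ₁σ₂ + σ₂σ₃ + σ₃σ₁)` of the codeword of `α + w β`, where `N` is the
size of the underlying set of binary vectors and `σ₁, σ₂, σ₃` are its character sums at `α`, `β`,
`α + β`. -/
def weightOfCharSums (N σ₁ σ₂ σ₃ : ℚ) : ℚ := 3 / 4 * N ^ 2 - 1 / 4 * (σ₁ * σ₂ + σ₂ * σ₃ + σ₃ * σ₁)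

lemma weightOfCharSums_mul {z₁ z₂ z₃ r : ℚ} (h₁₂ : z₁ * z₂ = r) (h₂₃ : z₂ * z₃ = r)
    (h₃₁ : z₃ * z₁ = r) (N l₁ l₂ l₃ : ℚ) :
    weightOfCharSums N (z₁ * l₁) (z₂ * l₂) (z₃ * l₃) =
      3 / 4 * N ^ 2 - r / 4 * (l₁ * l₂ + l₂ * l₃ + l₃ * l₁) := by
  rw [weightOfCharSums]
  linear_combination -1 / 4 * (l₁ * l₂ * h₁₂ + l₂ * l₃ * h₂₃ + l₃ * l₁ * h₃₁)

lemma wtF_definingSet_dvec (hw : w ^ 2 + w + 1 = 0) (E : Finset (Fin m → ZMod 2))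
    (α β : Fin m → ZMod 2) :
    (wtF (definingSet w E) (dvec w (α, β)) : ℚ) =
      weightOfCharSums #E (charSum E α) (charSum E β) (charSum E (α + β)) := by
  have hsplit : (#{p ∈ E ×ˢ E | dotF (dvec w (α, β)) (dvec w p) = 0} : ℚ)
      + #{p ∈ E ×ˢ E | dotF (dvec w (α, β)) (dvec w p) ≠ 0} = #E ^ 2 := by
    rw [sq, ← Nat.cast_mul, ← Finset.card_product]
    exact_mod_cast Finset.card_filter_add_card_filter_not _
  rw [card_filter_dotF_dvec_eq_zero hw] at hsplit
  rw [wtF_definingSet hw, weightOfCharSums]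
  linear_combination hsplit

lemma card_definingSet (hw : w ^ 2 + w + 1 = 0) {E : Finset (Fin m → ZMod 2)} (hE : 0 ∈ E) :
    #(definingSet w E) = #E ^ 2 - 1 := by
  have hmem : 0 ∈ (E ×ˢ E).image (dvec w) :=
    Finset.mem_image.2 ⟨0, Finset.mk_mem_product hE hE, dvec_zero w⟩
  rw [Finset.card_erase_of_mem hmem, Finset.card_image_of_injective _ (dvec_injective hw),
    Finset.card_product, sq]

end DefiningSet

section Codewords

variable {m : ℕ}

lemma codeword_eq_codeword_iff {K : Type} [Field K] {D : Finset (Fin m → K)} {S : Finset (Fin m)}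
    (hD : ∀ d ∈ D, ∀ i ∉ S, d i = 0) (hS : ∀ i ∈ S, Pi.single i 1 ∈ D) {x y : Fin m → K} :
    codeword D x = codeword D y ↔ S.restrict x = S.restrict y := by
  constructor
  · intro h
    funext ⟨i, hi⟩
    simpa [codeword, dotF, Pi.single_apply] using congrFun h ⟨_, hS i hi⟩
  · intro h
    funext d
    change ∑ i, x i * d.1 i = ∑ i, y i * d.1 i
    refine Finset.sum_congr rfl fun i _ ↦ ?_
    by_cases hi : i ∈ S
    · rw [show x i = y i from congrFun h ⟨i, hi⟩]
    · rw [hD d.1 d.2 i hi, mul_zero, mul_zero]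

lemma card_image_codeword {D : Finset (Fin m → F)} {S : Finset (Fin m)}
    (hD : ∀ d ∈ D, ∀ i ∉ S, d i = 0) (hS : ∀ i ∈ S, Pi.single i 1 ∈ D) :
    #(Finset.univ.image (codeword D)) = Fintype.card F ^ #S := by
  obtain ⟨g, hg⟩ : ∃ g : (S → F) → ({d // d ∈ D} → F), codeword D = g ∘ S.restrict :=
    (Function.factorsThrough_iff _).1 fun _ _ h ↦ (codeword_eq_codeword_iff hD hS).2 h
  have hsurj : Function.Surjective (S.restrict (π := fun _ ↦ F)) :=
    Subtype.surjective_restrict (β := fun _ ↦ F) (· ∈ S)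
  have hinj : Function.Injective g := hsurj.forall₂.2 fun x y hxy ↦
    (codeword_eq_codeword_iff hD hS).1 (by rwa [hg])
  rw [hg, ← Finset.image_image, Finset.image_univ_of_surjective hsurj,
    Finset.card_image_of_injective _ hinj, Finset.card_univ, Fintype.card_fun, Fintype.card_coe]

lemma single_mem_definingSet {K : Type} [Field K] [DecidableEq K] (w : K)
    {E : Finset (Fin m → ZMod 2)} (hE : 0 ∈ E) {i : Fin m} (hi : Pi.single i 1 ∈ E) :
    Pi.single i 1 ∈ definingSet w E := by
  refine Finset.mem_erase.2 ⟨Pi.single_ne_zero_iff.2 one_ne_zero, Finset.mem_image.2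
    ⟨(Pi.single i 1, 0), Finset.mk_mem_product hi hE, funext fun j ↦ ?_⟩⟩
  by_cases hj : j = i
  · subst hj
    simp [dvec, e2_zero, e2_one]
  · simp [dvec, e2_zero, hj]

lemma apply_eq_zero_of_mem_definingSet {K : Type} [Field K] [DecidableEq K] {w : K}
    {E : Finset (Fin m → ZMod 2)} {i : Fin m} (hE : ∀ v ∈ E, v i = 0) {d : Fin m → K}
    (hd : d ∈ definingSet w E) : d i = 0 := by
  obtain ⟨⟨d₁, d₂⟩, hp, rfl⟩ := Finset.mem_image.1 (Finset.mem_of_mem_erase hd)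
  obtain ⟨h₁, h₂⟩ := Finset.mem_product.1 hp
  simp [dvec, hE d₁ h₁, hE d₂ h₂, e2_zero]

lemma card_image_codeword_definingSet_delta_union (w : F) (A B : Finset (Fin m)) :
    #(Finset.univ.image (codeword (definingSet w (delta A ∪ delta B)))) =
      Fintype.card F ^ #(A ∪ B) := by
  refine card_image_codeword (fun d hd i hi ↦ apply_eq_zero_of_mem_definingSet ?_ hd)
    fun i hi ↦ single_mem_definingSet w (Finset.mem_union_left _ (zero_mem_delta A)) ?_
  · intro v hv
    rw [Finset.notMem_union] at hi
    obtain hvA | hvB := Finset.mem_union.1 hv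
    · exact mem_delta.1 hvA i hi.1
    · exact mem_delta.1 hvB i hi.2
  · simp only [Finset.mem_union, mem_delta] at hi ⊢
    exact hi.imp (fun hi j hj ↦ Pi.single_eq_of_ne (ne_of_mem_of_not_mem hi hj).symm _)
      fun hi j hj ↦ Pi.single_eq_of_ne (ne_of_mem_of_not_mem hi hj).symm _

end Codewords

section WeightDistribution

variable {m : ℕ}

lemma charP_two_of_card_eq_four {K : Type*} [CommRing K] [IsDomain K] [Fintype K]
    (hK : Fintype.card K = 4) : CharP K 2 :=
  charP_of_card_eq_prime_pow (f := 2) hK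

lemma dvec_bijective {K : Type} [Field K] [Fintype K] (hK : Fintype.card K = 4) {w : K}
    (hw : w ^ 2 + w + 1 = 0) : Function.Bijective (dvec (m := m) w) := by
  have := charP_two_of_card_eq_four hK
  refine (Fintype.bijective_iff_injective_and_card _).2 ⟨dvec_injective hw, ?_⟩
  rw [Fintype.card_prod, Fintype.card_fun, Fintype.card_fun, hK, ZMod.card, ← mul_pow]
  norm_num

/-- The weight of the codeword of `α + w β` for `Δ_A ∪ Δ_B`, where `X = 2^|A|`, `Y = 2^|B|`,
`Z = 2^|A ∩ B|`, in terms of the indicators of vanishing on `A ∩ B` (`r`, for both of `α` and `β`),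
on `A \ B` (`p₁, p₂, p₃` for `α`, `β`, `α + β`) and on `B \ A` (`q₁, q₂, q₃`). -/
def patternWeight (X Y Z r p₁ p₂ p₃ q₁ q₂ q₃ : ℚ) : ℚ :=
  3 / 4 * (X + Y - Z) ^ 2 - r / 4 *
    ((X * p₁ + Y * q₁ - Z) * (X * p₂ + Y * q₂ - Z) + (X * p₂ + Y * q₂ - Z) * (X * p₃ + Y * q₃ - Z)
      + (X * p₃ + Y * q₃ - Z) * (X * p₁ + Y * q₁ - Z))

lemma patternWeight_zero (X Y Z p₁ p₂ p₃ q₁ q₂ q₃ : ℚ) :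
    patternWeight X Y Z 0 p₁ p₂ p₃ q₁ q₂ q₃ = 3 / 4 * (X + Y - Z) ^ 2 := by
  simp [patternWeight]

lemma patternWeight_rotate (X Y Z r p₁ p₂ p₃ q₁ q₂ q₃ : ℚ) :
    patternWeight X Y Z r p₂ p₃ p₁ q₂ q₃ q₁ = patternWeight X Y Z r p₁ p₂ p₃ q₁ q₂ q₃ := by
  simp only [patternWeight]
  ring

lemma wtF_definingSet_delta_union {K : Type} [Field K] [CharP K 2] [DecidableEq K] {w : K}
    (hw : w ^ 2 + w + 1 = 0) (A B : Finset (Fin m)) (y : Fin m → ZMod 2 × ZMod 2) :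
    (wtF (definingSet w (delta A ∪ delta B)) (dvec w (Prod.fst ∘ y, Prod.snd ∘ y)) : ℚ) =
      patternWeight (2 ^ #A) (2 ^ #B) (2 ^ #(A ∩ B)) (zeroInd ((A ∩ B).restrict y))
        (zeroInd (Prod.fst ∘ (A \ B).restrict y)) (zeroInd (Prod.snd ∘ (A \ B).restrict y))
        (zeroInd (Prod.fst ∘ (A \ B).restrict y + Prod.snd ∘ (A \ B).restrict y))
        (zeroInd (Prod.fst ∘ (B \ A).restrict y)) (zeroInd (Prod.snd ∘ (B \ A).restrict y))
        (zeroInd (Prod.fst ∘ (B \ A).restrict y + Prod.snd ∘ (B \ A).restrict y)) := by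
  have hcomp_fst (S : Finset (Fin m)) : S.restrict (Prod.fst ∘ y) = Prod.fst ∘ S.restrict y := rfl
  have hcomp_snd (S : Finset (Fin m)) : S.restrict (Prod.snd ∘ y) = Prod.snd ∘ S.restrict y := rfl
  have hcomp_add (S : Finset (Fin m)) : S.restrict (Prod.fst ∘ y + Prod.snd ∘ y) =
      Prod.fst ∘ S.restrict y + Prod.snd ∘ S.restrict y := rfl
  have hzero (S : Finset (Fin m)) : S.restrict (0 : Fin m → ZMod 2) = 0 := rfl
  rw [wtF_definingSet_dvec hw, ← charSum_zero]
  have h₁₂ := zeroInd_fst_mul_zeroInd_snd ((A ∩ B).restrict y)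
  have h₂₃ := (zeroInd_mul_zeroInd_add (Prod.fst ∘ (A ∩ B).restrict y) _).trans h₁₂
  have h₃₁ := (zeroInd_add_mul_zeroInd _ (Prod.snd ∘ (A ∩ B).restrict y)).trans h₁₂
  simp only [charSum_delta_union, hcomp_fst, hcomp_snd, hcomp_add, hzero, zeroInd_zero, one_mul,
    mul_one, weightOfCharSums_mul h₁₂ h₂₃ h₃₁, patternWeight]

lemma sum_comp_wtF_definingSet_delta_union {M : Type*} [AddCommMonoid M]
    (hF : Fintype.card F = 4) {w : F} (hw : w ^ 2 + w + 1 = 0) (A B : Finset (Fin m)) (f : ℚ → M) :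
    ∑ x, f (wtF (definingSet w (delta A ∪ delta B)) x) =
      4 ^ (m - #(A ∪ B)) • (patternSum (2 ^ #(A \ B)) (fun p₁ p₂ p₃ ↦
          patternSum (2 ^ #(B \ A)) fun q₁ q₂ q₃ ↦
            f (patternWeight (2 ^ #A) (2 ^ #B) (2 ^ #(A ∩ B)) 1 p₁ p₂ p₃ q₁ q₂ q₃))
        + (4 ^ #(A ∪ B) - 4 ^ (#(A \ B) + #(B \ A))) •
          f (3 / 4 * (2 ^ #A + 2 ^ #B - 2 ^ #(A ∩ B)) ^ 2)) := by
  have := charP_two_of_card_eq_four hF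
  have hbij : Function.Bijective fun y : Fin m → ZMod 2 × ZMod 2 ↦
      dvec w (Prod.fst ∘ y, Prod.snd ∘ y) :=
    (dvec_bijective hF hw).comp (Equiv.arrowProdEquivProdArrow _ _ _).bijective
  have hunion : #(A ∪ B) = #(A \ B) + #(B \ A) + #(A ∩ B) := by
    rw [← Finset.card_sdiff_add_card, add_assoc, Finset.inter_comm,
      Finset.card_sdiff_add_card_inter]
  rw [← Fintype.sum_bijective _ hbij _ _ fun _ ↦ rfl]
  simp only [wtF_definingSet_delta_union hw]
  rw [sum_comp_restrict_sdiff_sdiff_inter A B fun p q r ↦ f (patternWeight (2 ^ #A) (2 ^ #B)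
    (2 ^ #(A ∩ B)) (zeroInd r) (zeroInd (Prod.fst ∘ p)) (zeroInd (Prod.snd ∘ p))
    (zeroInd (Prod.fst ∘ p + Prod.snd ∘ p)) (zeroInd (Prod.fst ∘ q)) (zeroInd (Prod.snd ∘ q))
    (zeroInd (Prod.fst ∘ q + Prod.snd ∘ q))),
    sum_sum_sum_comp_zeroInd (g := fun r p₁ p₂ p₃ q₁ q₂ q₃ ↦ f (patternWeight (2 ^ #A) (2 ^ #B)
      (2 ^ #(A ∩ B)) r p₁ p₂ p₃ q₁ q₂ q₃)) fun _ _ _ _ _ _ ↦ by rw [patternWeight_zero]]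
  simp only [Fintype.card_coe, Fintype.card_fin, ZMod.card, Fintype.card_prod, Nat.reduceMul,
    Nat.mul_sub_one, ← pow_add, ← hunion]

lemma patternSum_patternSum_comp_patternWeight {M : Type*} [AddCommMonoid M] (f : ℚ → M) (n k : ℕ)
    (X Y Z : ℚ) :
    patternSum n (fun p₁ p₂ p₃ ↦ patternSum k fun q₁ q₂ q₃ ↦
        f (patternWeight X Y Z 1 p₁ p₂ p₃ q₁ q₂ q₃)) =
      (f 0 + (3 * (k - 1)) • f (Y * (X + 3 * Y / 4 - Z))
        + ((k - 1) * (k - 2)) • f (3 / 4 * Y * (2 * X + Y - 2 * Z)))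
      + (3 * (n - 1)) • (f (X * (3 * X / 4 + Y - Z))
        + (k - 1) • (f ((X + Y) * (3 * X / 4 + 3 * Y / 4 - Z))
          + 2 • f (3 / 4 * (X + Y - Z) ^ 2 - 1 / 4 * (X - Z) * (Y - Z)
              + 1 / 4 * Z * (X + Y - 2 * Z)))
        + ((k - 1) * (k - 2)) • f (3 / 4 * (X + Y - Z) ^ 2 + 1 / 4 * Z * (2 * X - 3 * Z)))
      + ((n - 1) * (n - 2)) • (f (3 / 4 * X * (X + 2 * Y - 2 * Z))
        + (3 * (k - 1)) • f (3 / 4 * (X + Y - Z) ^ 2 + 1 / 4 * Z * (2 * Y - 3 * Z))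
        + ((k - 1) * (k - 2)) • f (3 / 4 * (X + Y) * (X + Y - 2 * Z))) := by
  have hrotate (p₁ p₂ p₃ : ℚ) :
      (patternSum k fun q₁ q₂ q₃ ↦ f (patternWeight X Y Z 1 p₂ p₃ p₁ q₁ q₂ q₃)) =
        patternSum k fun q₁ q₂ q₃ ↦ f (patternWeight X Y Z 1 p₁ p₂ p₃ q₁ q₂ q₃) := by
    rw [← patternSum_rotate]
    simp only [patternWeight_rotate]
  have hsymm (p : ℚ) := patternSum_of_rotate (n := k)
    (f := fun q₁ q₂ q₃ ↦ f (patternWeight X Y Z 1 p p p q₁ q₂ q₃))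
    fun q₁ q₂ q₃ ↦ by rw [patternWeight_rotate]
  rw [patternSum_of_rotate hrotate, hsymm, hsymm, patternSum, two_smul,
    ← add_assoc (f _)]
  simp only [patternWeight]
  ring_nf

theorem quaternary_code_two_maximal_elements_general (hF : Fintype.card F = 4) (w : F)
    (hw : w ^ 2 + w + 1 = 0) (A B : Finset (Fin m))
    (a b c s t u : ℕ) (ha : a = A.card) (hb : b = B.card) (hc : c = (A ∩ B).card)
    (hs : s = (A \ B).card) (ht : t = (B \ A).card) (hu : u = (A ∪ B).card)
    (N : ℚ) (hN : N = 2 ^ a + 2 ^ b - 2 ^ c) :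
    #(definingSet w (delta A ∪ delta B)) = (2 ^ a + 2 ^ b - 2 ^ c) ^ 2 - 1
    ∧ #(Finset.univ.image (codeword (definingSet w (delta A ∪ delta B)))) = 4 ^ u
    ∧ Finset.univ.val.map (fun x ↦ (wtF (definingSet w (delta A ∪ delta B)) x : ℚ)) =
      Multiset.replicate (4 ^ (m - u)) 0
        + Multiset.replicate (3 * (2 ^ s - 1) * 4 ^ (m - u))
            (2 ^ a * (3 * 2 ^ a / 4 + 2 ^ b - 2 ^ c))
        + Multiset.replicate (3 * (2 ^ t - 1) * 4 ^ (m - u))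
            (2 ^ b * (2 ^ a + 3 * 2 ^ b / 4 - 2 ^ c))
        + Multiset.replicate (3 * (2 ^ s - 1) * (2 ^ t - 1) * 4 ^ (m - u))
            ((2 ^ a + 2 ^ b) * (3 * 2 ^ a / 4 + 3 * 2 ^ b / 4 - 2 ^ c))
        + Multiset.replicate ((2 ^ s - 1) * (2 ^ s - 2) * 4 ^ (m - u))
            (3 / 4 * 2 ^ a * (2 ^ a + 2 ^ (b + 1) - 2 ^ (c + 1)))
        + Multiset.replicate ((2 ^ t - 1) * (2 ^ t - 2) * 4 ^ (m - u))
            (3 / 4 * 2 ^ b * (2 ^ (a + 1) + 2 ^ b - 2 ^ (c + 1)))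
        + Multiset.replicate (6 * (2 ^ s - 1) * (2 ^ t - 1) * 4 ^ (m - u))
            (3 / 4 * N ^ 2 - 1 / 4 * (2 ^ a - 2 ^ c) * (2 ^ b - 2 ^ c)
              + 1 / 4 * 2 ^ c * (2 ^ a + 2 ^ b - 2 ^ (c + 1)))
        + Multiset.replicate (3 * (2 ^ s - 1) * (2 ^ t - 1) * (2 ^ t - 2) * 4 ^ (m - u))
            (3 / 4 * N ^ 2 + 1 / 4 * 2 ^ c * (2 ^ (a + 1) - 3 * 2 ^ c))
        + Multiset.replicate (3 * (2 ^ s - 1) * (2 ^ t - 1) * (2 ^ s - 2) * 4 ^ (m - u))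
            (3 / 4 * N ^ 2 + 1 / 4 * 2 ^ c * (2 ^ (b + 1) - 3 * 2 ^ c))
        + Multiset.replicate ((2 ^ s - 1) * (2 ^ t - 1) * (2 ^ s - 2) * (2 ^ t - 2) * 4 ^ (m - u))
            (3 / 4 * (2 ^ a + 2 ^ b) * (2 ^ a + 2 ^ b - 2 ^ (c + 1)))
        + Multiset.replicate ((4 ^ u - 4 ^ (s + t)) * 4 ^ (m - u)) (3 / 4 * N ^ 2) := by
  have := charP_two_of_card_eq_four hF
  subst ha hb hc hs ht hu hN
  refine ⟨?_, ?_, ?_⟩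
  · rw [card_definingSet hw (Finset.mem_union_left _ (zero_mem_delta A)), card_delta_union]
  · rw [card_image_codeword_definingSet_delta_union, hF]
  · have hsingle := sum_comp_wtF_definingSet_delta_union hF hw A B fun q ↦ ({q} : Multiset ℚ)
    rw [patternSum_patternSum_comp_patternWeight] at hsingle
    rw [← Multiset.sum_map_singleton (Multiset.map _ _), Multiset.map_map]
    refine hsingle.trans ?_
    simp only [← Multiset.nsmul_singleton, pow_succ (2 : ℚ), mul_comm _ (2 : ℚ)]
    module

end WeightDistribution

/-- Proposition 4.7: weight distribution of the quaternary code `C_{D^*}` for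
`D = Δ + wΔ`, where `Δ = Δ_A ∪ Δ_B` is the simplicial complex with maximal elements
`A ⊄ B` and `B ⊄ A`. -/
theorem quaternary_code_two_maximal_elements {m : ℕ} (hm : 1 ≤ m)
    (hF : Fintype.card F = 4) (w : F) (hw : w ^ 2 + w + 1 = 0)
    (A B : Finset (Fin m)) (hA : ¬ A ⊆ B) (hB : ¬ B ⊆ A)
    (a b c s t u : ℕ) (ha : a = A.card) (hb : b = B.card) (hc : c = (A ∩ B).card)
    (hs : s = (A \ B).card) (ht : t = (B \ A).card) (hu : u = (A ∪ B).card)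
    (N : ℚ) (hN : N = 2 ^ a + 2 ^ b - 2 ^ c) :
    ((((delta A ∪ delta B) ×ˢ (delta A ∪ delta B)).image (dvec w)).erase 0).card
      = (2 ^ a + 2 ^ b - 2 ^ c) ^ 2 - 1
    ∧ (Finset.univ.image
        (fun x : Fin m → F => codeword
          ((((delta A ∪ delta B) ×ˢ (delta A ∪ delta B)).image (dvec w)).erase 0) x)).card
      = 4 ^ u
    ∧ (Finset.univ.val.map
        (fun x : Fin m → F =>
          (wtF ((((delta A ∪ delta B) ×ˢ (delta A ∪ delta B)).image (dvec w)).erase 0) x : ℚ)))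
      = Multiset.replicate (4 ^ (m - u)) 0
        + Multiset.replicate (3 * (2 ^ s - 1) * 4 ^ (m - u))
            (2 ^ a * (3 * 2 ^ a / 4 + 2 ^ b - 2 ^ c))
        + Multiset.replicate (3 * (2 ^ t - 1) * 4 ^ (m - u))
            (2 ^ b * (2 ^ a + 3 * 2 ^ b / 4 - 2 ^ c))
        + Multiset.replicate (3 * (2 ^ s - 1) * (2 ^ t - 1) * 4 ^ (m - u))
            ((2 ^ a + 2 ^ b) * (3 * 2 ^ a / 4 + 3 * 2 ^ b / 4 - 2 ^ c))
        + Multiset.replicate ((2 ^ s - 1) * (2 ^ s - 2) * 4 ^ (m - u))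
            (3 / 4 * 2 ^ a * (2 ^ a + 2 ^ (b + 1) - 2 ^ (c + 1)))
        + Multiset.replicate ((2 ^ t - 1) * (2 ^ t - 2) * 4 ^ (m - u))
            (3 / 4 * 2 ^ b * (2 ^ (a + 1) + 2 ^ b - 2 ^ (c + 1)))
        + Multiset.replicate (6 * (2 ^ s - 1) * (2 ^ t - 1) * 4 ^ (m - u))
            (3 / 4 * N ^ 2 - 1 / 4 * (2 ^ a - 2 ^ c) * (2 ^ b - 2 ^ c)
              + 1 / 4 * 2 ^ c * (2 ^ a + 2 ^ b - 2 ^ (c + 1)))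
        + Multiset.replicate (3 * (2 ^ s - 1) * (2 ^ t - 1) * (2 ^ t - 2) * 4 ^ (m - u))
            (3 / 4 * N ^ 2 + 1 / 4 * 2 ^ c * (2 ^ (a + 1) - 3 * 2 ^ c))
        + Multiset.replicate (3 * (2 ^ s - 1) * (2 ^ t - 1) * (2 ^ s - 2) * 4 ^ (m - u))
            (3 / 4 * N ^ 2 + 1 / 4 * 2 ^ c * (2 ^ (b + 1) - 3 * 2 ^ c))
        + Multiset.replicate ((2 ^ s - 1) * (2 ^ t - 1) * (2 ^ s - 2) * (2 ^ t - 2) * 4 ^ (m - u))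
            (3 / 4 * (2 ^ a + 2 ^ b) * (2 ^ a + 2 ^ b - 2 ^ (c + 1)))
        + Multiset.replicate ((4 ^ u - 4 ^ (s + t)) * 4 ^ (m - u)) (3 / 4 * N ^ 2) :=
  quaternary_code_two_maximal_elements_general hF w hw A B a b c s t u ha hb hc hs ht hu N hN
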